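/- arXiv:0801.3714 — 2 statements merged into one kernel-verified Lean document; each statement's English description precedes it below -/
import Mathlib

section
/- Let G be a connected bridgeless cubic graph such that every 3-edge-cut consists of the edges incident to a common vertex. Then for any path u,v,w,x of length three in G, either G has a perfect matching containing both (u,v) and (w,x), or G minus the edges (u,v),(v,w),(w,x) is bipartite. -/
/-! Multigraphs: vertex type `V`, edge type `E`, incidence map `ends : E → Sym2 V`. -/

namespace Mg

variable {V E : Type}

/-- No loops: no edge has equal endpoints. -/
def NoLoops (ends : E → Sym2 V) : Prop := ∀ e, ¬ (ends e).IsDiag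

/-- Cubic: every vertex is incident with exactly three edges. -/
def IsCubic (ends : E → Sym2 V) : Prop := ∀ v, {e | v ∈ ends e}.ncard = 3

/-- Reachability using only edges in `F`. -/
def Reach (ends : E → Sym2 V) (F : Set E) : V → V → Prop :=
  Relation.ReflTransGen (fun a b => ∃ e ∈ F, ends e = s(a, b))

/-- Connected. -/
def Connected (ends : E → Sym2 V) : Prop := ∀ v w, Reach ends Set.univ v w

/-- Bridgeless: the endpoints of each edge remain joined after its removal. -/
def Bridgeless (ends : E → Sym2 V) : Prop :=
  ∀ e v w, ends e = s(v, w) → Reach ends {f | f ≠ e} v w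

/-- A 2-factor: every vertex is incident with exactly two edges of `F`. -/
def IsTwoFactor (ends : E → Sym2 V) (F : Set E) : Prop :=
  ∀ v, {e | e ∈ F ∧ v ∈ ends e}.ncard = 2

/-- The component of `v` in the spanning subgraph with edge set `F`. -/
def component (ends : E → Sym2 V) (F : Set E) (v : V) : Set V := {w | Reach ends F v w}

/-- Every 2-factor consists only of 5-cycles: each component of any 2-factor
has exactly five vertices. -/
def TwoFactorsAllC5 (ends : E → Sym2 V) : Prop :=
  ∀ F : Set E, IsTwoFactor ends F → ∀ v, (component ends F v).ncard = 5

/-- A perfect matching: every vertex is incident with exactly one edge of `M`. -/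
def IsPerfectMatching (ends : E → Sym2 V) (M : Set E) : Prop :=
  ∀ v, ∃! e, e ∈ M ∧ v ∈ ends e

/-- A cycle of length `n`: `n` distinct vertices and `n` distinct edges, cyclically. -/
def HasCycle (ends : E → Sym2 V) (n : ℕ) : Prop :=
  ∃ (c : ZMod n → V) (f : ZMod n → E), Function.Injective c ∧ Function.Injective f ∧
    ∀ i, ends (f i) = s(c i, c (i + 1))

end Mg

namespace Mg

open Finset

lemma tutte_family {W : Type} [Fintype W] (H : SimpleGraph W)
    (hM : ¬ ∃ M : H.Subgraph, M.IsPerfectMatching) (hev : Even (Fintype.card W)) :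
    ∃ (ι : Type) (_ : Fintype ι) (S : Finset W) (C : ι → Finset W),
      S.card + 2 ≤ Fintype.card ι ∧ (∀ i, Odd (C i).card) ∧ (∀ i, ∀ a ∈ C i, a ∉ S) ∧
      (∀ i j a, a ∈ C i → a ∈ C j → i = j) ∧
      (∀ i a b, a ∈ C i → H.Adj a b → b ∈ C i ∨ b ∈ S) := by
  classical
  rw [SimpleGraph.tutte] at hM
  push Not at hM
  obtain ⟨S, hS⟩ := hM
  unfold SimpleGraph.IsTutteViolator at hS
  set K := ((⊤ : H.Subgraph).deleteVerts S).coe with hK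
  have hodd := SimpleGraph.odd_ncard_oddComponents (G := K)
  have hcard : Nat.card ((⊤ : H.Subgraph).deleteVerts S).verts + S.ncard = Fintype.card W := by
    have := Set.ncard_add_ncard_compl S
    rw [Nat.card_eq_fintype_card] at this
    rw [Nat.card_coe_set_eq]
    have h2 : ((⊤ : H.Subgraph).deleteVerts S).verts = Sᶜ := by
      ext; simp
    rw [h2]; omega
  have hSc : S.toFinset.card = S.ncard := (Set.ncard_eq_toFinset_card' S).symm
  refine ⟨K.oddComponents, inferInstance, S.toFinset,
    fun c => (Subtype.val '' (c : K.ConnectedComponent).supp).toFinset, ?_, ?_, ?_, ?_, ?_⟩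
  · rw [← Nat.card_eq_fintype_card, Nat.card_coe_set_eq, hSc]
    rcases Nat.even_or_odd K.oddComponents.ncard with h | h
    · have := mt hodd.2 (Nat.not_odd_iff_even.2 h)
      rw [Nat.not_odd_iff_even] at this
      grind
    · have := hodd.1 h
      grind
  · rintro ⟨c, hc⟩
    rw [← Set.ncard_eq_toFinset_card', Set.ncard_image_of_injective _ Subtype.val_injective]
    exact hc
  · rintro ⟨c, hc⟩ a ha
    simp only [Set.mem_toFinset, Set.mem_image] at ha ⊢
    obtain ⟨x, -, rfl⟩ := ha
    have := x.2
    simp at this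
    exact this
  · rintro ⟨c, hc⟩ ⟨d, hd⟩ a ha hb
    simp only [Set.mem_toFinset, Set.mem_image] at ha hb
    obtain ⟨x, hx, rfl⟩ := ha
    obtain ⟨y, hy, hxy⟩ := hb
    obtain rfl := Subtype.val_injective hxy
    rw [SimpleGraph.ConnectedComponent.mem_supp_iff] at hx hy
    exact Subtype.ext (hx.symm.trans hy)
  · rintro ⟨c, hc⟩ a b ha hab
    simp only [Set.mem_toFinset, Set.mem_image] at ha ⊢
    obtain ⟨x, hx, rfl⟩ := ha
    by_cases hb : b ∈ S
    · exact Or.inr hb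
    · left
      have hxS := x.2
      simp only [SimpleGraph.Subgraph.deleteVerts_verts, SimpleGraph.Subgraph.verts_top, Set.mem_sdiff, Set.mem_univ, true_and] at hxS
      refine ⟨⟨b, by simpa using hb⟩, ?_, rfl⟩
      rw [← SimpleGraph.ConnectedComponent.mem_supp_congr_adj c (v := x)]
      · exact hx
      · simp [hK, SimpleGraph.Subgraph.deleteVerts_adj, hab, hb, hxS]

section count
variable {V E : Type} [Fintype V] [Fintype E]

open Classical in
/-- Boundary edges. -/
noncomputable def bd (ends : E → Sym2 V) (A : Finset V) : Finset E :=
  univ.filter fun e => ∃ a b, a ∈ A ∧ b ∉ A ∧ ends e = s(a, b)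

open Classical in
/-- Inner edges. -/
noncomputable def inn (ends : E → Sym2 V) (A : Finset V) : Finset E :=
  univ.filter fun e => ∀ a ∈ ends e, a ∈ A

lemma mem_bd {ends : E → Sym2 V} {A : Finset V} {e : E} :
    e ∈ bd ends A ↔ ∃ a b, a ∈ A ∧ b ∉ A ∧ ends e = s(a, b) := by simp [bd]

lemma mem_inn {ends : E → Sym2 V} {A : Finset V} {e : E} :
    e ∈ inn ends A ↔ ∀ a ∈ ends e, a ∈ A := by simp [inn]

lemma count (ends : E → Sym2 V) (hl : NoLoops ends) (hc : IsCubic ends) (A : Finset V) :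
    3 * A.card = 2 * (inn ends A).card + (bd ends A).card := by
  classical
  have h1 : ∀ v, (univ.filter fun e => v ∈ ends e).card = 3 := by
    intro v
    rw [← hc v, Set.ncard_eq_toFinset_card']
    congr 1; ext; simp
  have h2 := Finset.sum_card_bipartiteAbove_eq_sum_card_bipartiteBelow
    (s := A) (t := (univ : Finset E)) (fun v e => v ∈ ends e)
  simp only [Finset.bipartiteAbove, Finset.bipartiteBelow, h1] at h2
  rw [Finset.sum_const, smul_eq_mul] at h2
  rw [mul_comm, h2, Finset.card_eq_sum_ones, Finset.card_eq_sum_ones, Finset.mul_sum]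
  unfold inn bd
  rw [Finset.sum_filter, Finset.sum_filter, ← Finset.sum_add_distrib]
  refine Finset.sum_congr rfl fun e _ => ?_
  have hle := hl e
  induction h : ends e using Sym2.ind with
  | _ p q =>
  rw [h] at hle
  have hpq : p ≠ q := by simpa using hle
  by_cases hp : p ∈ A <;> by_cases hq : q ∈ A
  · have : (A.filter fun a => a ∈ s(p,q)) = {p, q} := by ext; simp; grind
    rw [this, Finset.card_pair hpq, if_pos, if_neg]
    · norm_num
    · rintro ⟨s, t, hs, ht, hst⟩; simp only [Sym2.eq_iff] at hst; grind
    · simp [hp, hq]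
  · have : (A.filter fun a => a ∈ s(p,q)) = {p} := by ext; simp; grind
    rw [this, Finset.card_singleton, if_neg, if_pos]
    · exact ⟨p, q, hp, hq, rfl⟩
    · simp [hp, hq]
  · have : (A.filter fun a => a ∈ s(p,q)) = {q} := by ext; simp; grind
    rw [this, Finset.card_singleton, if_neg, if_pos]
    · exact ⟨q, p, hq, hp, Sym2.eq_swap⟩
    · simp [hp, hq]
  · have : (A.filter fun a => a ∈ s(p,q)) = ∅ := by ext; simp; grind
    rw [this, Finset.card_empty, if_neg, if_neg]
    · norm_num
    · rintro ⟨s, t, hs, ht, hst⟩; simp only [Sym2.eq_iff] at hst; grind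
    · simp [hp, hq]

lemma reach_closed {ends : E → Sym2 V} {F : Set E} {A : Finset V}
    (h : ∀ e ∈ F, e ∉ bd ends A) {a b : V} (ha : a ∈ A) (hr : Reach ends F a b) : b ∈ A := by
  induction hr with
  | refl => exact ha
  | tail _ hbc ih =>
    obtain ⟨e, he, hee⟩ := hbc
    by_contra hcon
    exact h e he (mem_bd.2 ⟨_, _, ih, hcon, hee⟩)

lemma bd_empty {ends : E → Sym2 V} (hconn : Connected ends) {A : Finset V}
    (h : bd ends A = ∅) {a b : V} (ha : a ∈ A) : b ∈ A :=
  reach_closed (F := Set.univ) (by simp [h]) ha (hconn a b)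

lemma bd_ne_one {ends : E → Sym2 V} (hb : Bridgeless ends) (A : Finset V) :
    (bd ends A).card ≠ 1 := by
  intro h
  obtain ⟨e, he⟩ := Finset.card_eq_one.1 h
  obtain ⟨a, b, ha, hbA, hab⟩ := mem_bd.1 (by rw [he]; simp : e ∈ bd ends A)
  exact hbA (reach_closed (F := {f | f ≠ e}) (by simp [he]) ha (hb e a b hab))

lemma odd_bd {ends : E → Sym2 V} (hl : NoLoops ends) (hc : IsCubic ends) (hb : Bridgeless ends)
    {A : Finset V} (hA : Odd A.card) : 3 ≤ (bd ends A).card := by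
  have h1 := count ends hl hc A
  have h2 := bd_ne_one hb A
  grind

/-- A small set with boundary of size three is a singleton. -/
lemma singleton_of_bd {ends : E → Sym2 V} (hl : NoLoops ends) (hc : IsCubic ends)
    (hconn : Connected ends)
    (hcut : ∀ e₁ e₂ e₃ : E, e₁ ≠ e₂ → e₁ ≠ e₃ → e₂ ≠ e₃ →
      ¬ (∀ v w : V, Mg.Reach ends {f | f ≠ e₁ ∧ f ≠ e₂ ∧ f ≠ e₃} v w) →
      ∃ v : V, v ∈ ends e₁ ∧ v ∈ ends e₂ ∧ v ∈ ends e₃)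
    {A : Finset V} (hA : (bd ends A).card = 3) {p q : V} (hpq : p ≠ q) (hp : p ∉ A) (hq : q ∉ A)
    {a b : V} (ha : a ∈ A) (hb : b ∈ A) : a = b := by
  classical
  obtain ⟨f₁, f₂, f₃, h12, h13, h23, he⟩ := Finset.card_eq_three.1 hA
  obtain ⟨y, y1, y2, y3⟩ := hcut f₁ f₂ f₃ h12 h13 h23 (by
    intro h
    refine hp (reach_closed ?_ ha (h a p))
    intro e hee
    rw [he]
    simpa using hee)
  have hinc : ∀ e, y ∈ ends e → e ∈ bd ends A := by
    have hsub : (bd ends A : Set E) ⊆ {e | y ∈ ends e} := by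
      intro e hee
      rw [he] at hee
      simp at hee
      rcases hee with rfl | rfl | rfl <;> assumption
    have := Set.eq_of_subset_of_ncard_le hsub (by rw [hc y, Set.ncard_coe_finset, hA])
      (Set.toFinite _)
    intro e hy
    have h3 : e ∈ {e | y ∈ ends e} := hy
    rw [← this] at h3
    exact h3
  have hbdy : ∀ e ∈ bd ends A, y ∈ ends e := by
    intro e hee
    rw [he] at hee
    simp at hee
    rcases hee with rfl | rfl | rfl <;> assumption
  by_cases hy : y ∈ A
  · -- A.erase y has no boundary
    have hempty : bd ends (A.erase y) = ∅ := by
      ext e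
      simp only [Finset.notMem_empty, iff_false]
      intro hee
      obtain ⟨c, d, hcA, hdA, hcd⟩ := mem_bd.1 hee
      rw [Finset.mem_erase] at hcA
      by_cases hdy : d = y
      · obtain ⟨c', d', h1, h2, h3⟩ := mem_bd.1 (hinc e (by rw [hcd, hdy]; simp))
        rw [hcd] at h3
        simp at h3
        grind
      · have hdA' : d ∉ A := by grind
        have := hbdy e (mem_bd.2 ⟨c, d, hcA.2, hdA', hcd⟩)
        rw [hcd] at this
        simp at this
        grind
    have key : ∀ c ∈ A, c = y := by
      intro c hcA
      by_contra hcy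
      have := bd_empty hconn hempty (b := p) (Finset.mem_erase.2 ⟨hcy, hcA⟩)
      exact hp (Finset.mem_of_mem_erase this)
    rw [key a ha, key b hb]
  · -- insert y A has no boundary
    exfalso
    have hempty : bd ends (insert y A) = ∅ := by
      ext e
      simp only [Finset.notMem_empty, iff_false]
      intro hee
      obtain ⟨c, d, hcA, hdA, hcd⟩ := mem_bd.1 hee
      rw [Finset.mem_insert] at hcA hdA
      push Not at hdA
      rcases hcA with rfl | hcA
      · obtain ⟨c', d', h1, h2, h3⟩ := mem_bd.1 (hinc e (by rw [hcd]; simp))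
        rw [hcd] at h3
        simp at h3
        grind
      · have := hbdy e (mem_bd.2 ⟨c, d, hcA, hdA.2, hcd⟩)
        rw [hcd] at this
        simp at this
        grind
    have h1 := bd_empty hconn hempty (b := p) (Finset.mem_insert_of_mem ha)
    have h2 := bd_empty hconn hempty (b := q) (Finset.mem_insert_of_mem ha)
    grind

lemma even_card {ends : E → Sym2 V} (hl : NoLoops ends) (hc : IsCubic ends) :
    Even (Fintype.card V) := by
  have h := count ends hl hc univ
  have : bd ends univ = ∅ := by ext e; simp [mem_bd]
  rw [this, Finset.card_univ] at h
  grind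

lemma bipartite_of_family {ends : E → Sym2 V}
    (hl : NoLoops ends) (hc : IsCubic ends) (hb : Bridgeless ends) (hconn : Connected ends)
    (hcut : ∀ e₁ e₂ e₃ : E, e₁ ≠ e₂ → e₁ ≠ e₃ → e₂ ≠ e₃ →
      ¬ (∀ v w : V, Mg.Reach ends {f | f ≠ e₁ ∧ f ≠ e₂ ∧ f ≠ e₃} v w) →
      ∃ v : V, v ∈ ends e₁ ∧ v ∈ ends e₂ ∧ v ∈ ends e₃)
    {ι : Type} [Fintype ι] (T : Finset V) (C : ι → Finset V)
    (hcard : T.card ≤ Fintype.card ι + 2) (hodd : ∀ i, Odd (C i).card)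
    (hCT : ∀ i, ∀ a ∈ C i, a ∉ T) (hdisj : ∀ i j a, a ∈ C i → a ∈ C j → i = j)
    (hcl : ∀ i a b e, a ∈ C i → ends e = s(a, b) → b ∈ C i ∨ b ∈ T)
    (e₁ e₂ e₃ : E) (h12 : e₁ ≠ e₂) (h13 : e₁ ≠ e₃) (h23 : e₂ ≠ e₃)
    (h1 : e₁ ∈ inn ends T) (h2 : e₂ ∈ inn ends T) (h3 : e₃ ∈ inn ends T)
    {p q : V} (hpq : p ≠ q) (hp : p ∈ T) (hq : q ∈ T)
    (e : E) (a c : V) (he : ends e = s(a, c)) (n1 : e ≠ e₁) (n2 : e ≠ e₂) (n3 : e ≠ e₃) :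
    ¬ (a ∈ T ↔ c ∈ T) := by
  classical
  have hT := count ends hl hc T
  have hbdC : ∀ i f, f ∈ bd ends (C i) → ∃ s t, s ∈ C i ∧ t ∈ T ∧ ends f = s(s, t) := by
    intro i f hf
    obtain ⟨s, t, hs, ht, hst⟩ := mem_bd.1 hf
    exact ⟨s, t, hs, (hcl i s t f hs hst).resolve_left ht, hst⟩
  have hsub : univ.biUnion (fun i => bd ends (C i)) ⊆ bd ends T := by
    intro f hf
    simp only [Finset.mem_biUnion, Finset.mem_univ, true_and] at hf
    obtain ⟨i, hi⟩ := hf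
    obtain ⟨s, t, hs, ht, hst⟩ := hbdC i f hi
    exact mem_bd.2 ⟨t, s, ht, hCT i s hs, hst.trans Sym2.eq_swap⟩
  have hU : (univ.biUnion (fun i => bd ends (C i))).card = ∑ i, (bd ends (C i)).card := by
    apply Finset.card_biUnion
    intro i _ j _ hij
    rw [Function.onFun, Finset.disjoint_left]
    intro f hi hj
    obtain ⟨s, t, hs, ht, hst⟩ := hbdC i f hi
    obtain ⟨s', t', hs', ht', hst'⟩ := hbdC j f hj
    rw [hst] at hst'
    simp at hst'
    rcases hst' with ⟨rfl, rfl⟩ | ⟨rfl, rfl⟩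
    · exact hij (hdisj i j _ hs hs')
    · exact hCT i _ hs ht'
  have hle := Finset.card_le_card hsub
  have h3le : ∀ i, 3 ≤ (bd ends (C i)).card := fun i => odd_bd hl hc hb (hodd i)
  have hsum : 3 * Fintype.card ι ≤ ∑ i, (bd ends (C i)).card := by
    have := Finset.sum_le_sum (s := (univ : Finset ι)) (fun i _ => h3le i)
    rw [Finset.sum_const, Finset.card_univ, smul_eq_mul] at this
    omega
  have htri : ({e₁, e₂, e₃} : Finset E) ⊆ inn ends T := by
    intro f hf
    simp at hf
    rcases hf with rfl | rfl | rfl <;> assumption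
  have hc3 : ({e₁, e₂, e₃} : Finset E).card = 3 := Finset.card_eq_three.2 ⟨_, _, _, h12, h13, h23, rfl⟩
  have hinn3 := Finset.card_le_card htri
  have hinn : ({e₁, e₂, e₃} : Finset E) = inn ends T :=
    Finset.eq_of_subset_of_card_le htri (by omega)
  have hbdeq : univ.biUnion (fun i => bd ends (C i)) = bd ends T :=
    Finset.eq_of_subset_of_card_le hsub (by omega)
  have hC3 : ∀ i, (bd ends (C i)).card = 3 := by
    have : ∑ i : ι, 3 = ∑ i, (bd ends (C i)).card := by
      rw [Finset.sum_const, Finset.card_univ, smul_eq_mul]; omega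
    have := (Finset.sum_eq_sum_iff_of_le (s := (univ : Finset ι)) (fun i _ => h3le i)).1 this
    intro i
    exact (this i (Finset.mem_univ i)).symm
  -- the rest is empty
  set D : Finset V := univ.filter fun d => d ∉ T ∧ ∀ i, d ∉ C i with hD
  have hDbd : bd ends D = ∅ := by
    ext f
    simp only [Finset.notMem_empty, iff_false]
    intro hf
    obtain ⟨d, d', hd, hd', hdd⟩ := mem_bd.1 hf
    simp only [hD, Finset.mem_filter, Finset.mem_univ, true_and, not_and, not_forall, not_not]
      at hd hd'
    by_cases hT' : d' ∈ T
    · have : f ∈ bd ends T := mem_bd.2 ⟨d', d, hT', hd.1, hdd.trans Sym2.eq_swap⟩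
      rw [← hbdeq] at this
      simp only [Finset.mem_biUnion, Finset.mem_univ, true_and] at this
      obtain ⟨i, hi⟩ := this
      obtain ⟨s, t, hs, ht, hst⟩ := hbdC i f hi
      rw [hdd] at hst
      simp at hst
      rcases hst with ⟨rfl, rfl⟩ | ⟨rfl, rfl⟩
      · exact hd.2 i hs
      · exact hd.1 ht
    · obtain ⟨i, hi⟩ := hd' hT'
      rcases hcl i d' d f hi (hdd.trans Sym2.eq_swap) with h | h
      · exact hd.2 i h
      · exact hd.1 h
  have hcov : ∀ d, d ∉ T → ∃ i, d ∈ C i := by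
    intro d hd
    by_contra hcon
    push Not at hcon
    have hdD : d ∈ D := by simp [hD, hd, hcon]
    have := bd_empty hconn hDbd (b := p) hdD
    simp [hD, hp] at this
  intro hiff
  by_cases haT : a ∈ T
  · have : e ∈ inn ends T := by
      rw [mem_inn, he]
      have := hiff.1 haT
      intro z hz
      simp at hz
      rcases hz with rfl | rfl <;> assumption
    rw [← hinn] at this
    simp at this
    tauto
  · have hcT : c ∉ T := fun h => haT (hiff.2 h)
    obtain ⟨i, hi⟩ := hcov a haT
    have hci := (hcl i a c e hi he).resolve_right hcT
    have : a = c := singleton_of_bd hl hc hconn hcut (hC3 i) hpq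
      (fun h => hCT i p h hp) (fun h => hCT i q h hq) hi hci
    have h := hl e
    rw [he, this] at h
    simp at h

end count

end Mg

theorem stmt18 {V E : Type} [Fintype V] [Fintype E] (ends : E → Sym2 V)
    (hl : Mg.NoLoops ends) (hc : Mg.IsCubic ends) (hb : Mg.Bridgeless ends)
    (hconn : Mg.Connected ends)
    (hcut : ∀ e₁ e₂ e₃ : E, e₁ ≠ e₂ → e₁ ≠ e₃ → e₂ ≠ e₃ →
      ¬ (∀ v w : V, Mg.Reach ends {f | f ≠ e₁ ∧ f ≠ e₂ ∧ f ≠ e₃} v w) →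
      ∃ v : V, v ∈ ends e₁ ∧ v ∈ ends e₂ ∧ v ∈ ends e₃) :
    ∀ (u v w x : V) (e₁ e₂ e₃ : E),
      ends e₁ = s(u, v) → ends e₂ = s(v, w) → ends e₃ = s(w, x) →
      u ≠ w → v ≠ x → u ≠ x →
      (∃ M : Set E, Mg.IsPerfectMatching ends M ∧ e₁ ∈ M ∧ e₃ ∈ M) ∨
      (∃ b : V → Bool, ∀ (e : E) (a c : V), ends e = s(a, c) →
        ends e ≠ s(u, v) → ends e ≠ s(v, w) → ends e ≠ s(w, x) → b a ≠ b c) := by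
  classical
  intro u v w x e₁ e₂ e₃ he₁ he₂ he₃ huw hvx hux
  have huv : u ≠ v := by have := hl e₁; rw [he₁] at this; simpa using this
  have hvw : v ≠ w := by have := hl e₂; rw [he₂] at this; simpa using this
  have hwx : w ≠ x := by have := hl e₃; rw [he₃] at this; simpa using this
  have h12 : e₁ ≠ e₂ := by
    rintro rfl; rw [he₁] at he₂; simp at he₂; grind
  have h13 : e₁ ≠ e₃ := by
    rintro rfl; rw [he₁] at he₃; simp at he₃; grind
  have h23 : e₂ ≠ e₃ := by
    rintro rfl; rw [he₂] at he₃; simp at he₃; grind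
  set P : Finset V := {u, v, w, x} with hP
  have hPcard : P.card = 4 := by
    rw [hP, Finset.card_insert_of_notMem (by simp [huv, huw, hux]),
      Finset.card_insert_of_notMem (by simp [hvw, hvx]), Finset.card_pair hwx]
  let H : SimpleGraph {a // a ∉ P} :=
    { Adj := fun a b => ∃ e, ends e = s(a.1, b.1)
      symm := ⟨fun a b ⟨e, he⟩ => ⟨e, he.trans Sym2.eq_swap⟩⟩
      loopless := ⟨fun a ⟨e, he⟩ => by have := hl e; rw [he] at this; simp at this⟩ }
  by_cases hM : ∃ M : H.Subgraph, M.IsPerfectMatching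
  · left
    obtain ⟨M, hM⟩ := hM
    rw [SimpleGraph.Subgraph.isPerfectMatching_iff] at hM
    have hex : ∀ z : Sym2 V, ∃ e : E, (∃ e', ends e' = z) → ends e = z := by
      intro z
      by_cases hz : ∃ e', ends e' = z
      · obtain ⟨e', h⟩ := hz
        exact ⟨e', fun _ => h⟩
      · exact ⟨e₁, fun h => absurd h hz⟩
    choose f hf using hex
    have hfM : ∀ a b, M.Adj a b → ends (f s(a.1, b.1)) = s(a.1, b.1) :=
      fun a b hab => hf _ (M.adj_sub hab)
    refine ⟨{e | e = e₁ ∨ e = e₃ ∨ ∃ a b, M.Adj a b ∧ e = f s(a.1, b.1)}, ?_, by simp, by simp⟩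
    intro z
    by_cases hz : z ∈ P
    · have hno : ∀ e, (∃ a b, M.Adj a b ∧ e = f s(a.1, b.1)) → z ∉ ends e := by
        rintro e ⟨a, b, hab, rfl⟩ hze
        rw [hfM a b hab] at hze
        simp at hze
        rcases hze with rfl | rfl
        · exact a.2 hz
        · exact b.2 hz
      have hz' : (z = u ∨ z = v) ∨ (z = w ∨ z = x) := by
        simp [hP] at hz; tauto
      rcases hz' with hz' | hz'
      · refine ⟨e₁, ⟨by simp, by rw [he₁]; simpa using hz'⟩, ?_⟩
        rintro e ⟨rfl | rfl | h, hze⟩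
        · rfl
        · rw [he₃] at hze; simp at hze; grind
        · exact absurd hze (hno e h)
      · refine ⟨e₃, ⟨by simp, by rw [he₃]; simpa using hz'⟩, ?_⟩
        rintro e ⟨rfl | rfl | h, hze⟩
        · rw [he₁] at hze; simp at hze; grind
        · rfl
        · exact absurd hze (hno e h)
    · have hzz : z ≠ u ∧ z ≠ v ∧ z ≠ w ∧ z ≠ x := by simpa [hP] using hz
      obtain ⟨b, hzb, huniq⟩ := hM ⟨z, hz⟩
      refine ⟨f s(z, b.1), ⟨Or.inr (Or.inr ⟨⟨z, hz⟩, b, hzb, rfl⟩), ?_⟩, ?_⟩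
      · rw [hfM ⟨z, hz⟩ b hzb]; simp
      · rintro e ⟨rfl | rfl | ⟨p, q, hpq, rfl⟩, hze⟩
        · rw [he₁] at hze; simp at hze; grind
        · rw [he₃] at hze; simp at hze; grind
        · rw [hfM p q hpq] at hze
          simp at hze
          rcases hze with rfl | rfl
          · rw [← huniq q hpq]
          · rw [← huniq p hpq.symm, Sym2.eq_swap]
  · right
    have hev : Even (Fintype.card {a // a ∉ P}) := by
      have h1 := Mg.even_card hl hc
      have h2 := Fintype.card_subtype_compl (fun a => a ∈ P)
      have h3 : Fintype.card {a // a ∈ P} = 4 := by rw [Fintype.card_coe, hPcard]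
      have h4 := Fintype.card_subtype_le (fun a => a ∈ P)
      rw [h3] at h2 h4
      grind
    obtain ⟨ι, _, S, C, hcard, hodd, hCS, hdisj, hcl⟩ := Mg.tutte_family H hM hev
    let em : {a // a ∉ P} ↪ V := Function.Embedding.subtype _
    have hmem : ∀ (A : Finset {a // a ∉ P}) (z : V), z ∈ A.map em ↔ ∃ h : z ∉ P, ⟨z, h⟩ ∈ A := by
      intro A z
      simp [em]
    set T : Finset V := P ∪ S.map em with hT
    have hPT : P ⊆ T := Finset.subset_union_left
    have huT : u ∈ T := hPT (by simp [hP])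
    have hvT : v ∈ T := hPT (by simp [hP])
    have hwT : w ∈ T := hPT (by simp [hP])
    have hxT : x ∈ T := hPT (by simp [hP])
    have hTcard : T.card ≤ 4 + S.card := by
      have := Finset.card_union_le P (S.map em)
      rwa [hPcard, Finset.card_map] at this
    have key := Mg.bipartite_of_family hl hc hb hconn hcut T (fun i => (C i).map em) (by omega)
      (fun i => by rw [Finset.card_map]; exact hodd i)
      (by
        intro i a ha haT
        obtain ⟨h, ha⟩ := (hmem _ _).1 ha
        rw [hT, Finset.mem_union, hmem] at haT
        rcases haT with h' | ⟨h', h''⟩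
        · exact h h'
        · exact hCS i _ ha h'')
      (by
        intro i j a ha hb
        obtain ⟨h, ha⟩ := (hmem _ _).1 ha
        obtain ⟨h', hb⟩ := (hmem _ _).1 hb
        exact hdisj i j _ ha hb)
      (by
        intro i a b e ha hab
        obtain ⟨h, ha⟩ := (hmem _ _).1 ha
        by_cases hbP : b ∈ P
        · exact Or.inr (hPT hbP)
        · rcases hcl i ⟨a, h⟩ ⟨b, hbP⟩ ha ⟨e, hab⟩ with h1 | h1
          · exact Or.inl ((hmem _ _).2 ⟨hbP, h1⟩)
          · exact Or.inr (Finset.mem_union_right _ ((hmem _ _).2 ⟨hbP, h1⟩)))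
      e₁ e₂ e₃ h12 h13 h23
      (by rw [Mg.mem_inn, he₁]; simp [huT, hvT])
      (by rw [Mg.mem_inn, he₂]; simp [hvT, hwT])
      (by rw [Mg.mem_inn, he₃]; simp [hwT, hxT])
      huv huT hvT
    refine ⟨fun a => decide (a ∈ T), ?_⟩
    intro e a c he n1 n2 n3 hbc
    refine key e a c he ?_ ?_ ?_ (by simpa using hbc)
    · rintro rfl; exact n1 he₁
    · rintro rfl; exact n2 he₂
    · rintro rfl; exact n3 he₃
end

section
/- If G is a bridgeless cubic graph, then for any two edges e and f of G there exists a 2-factor of G containing both e and f. -/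
namespace Mg19

open Finset Classical

variable {V E : Type} [Fintype V] [Fintype E]

/-- number of ends of `a` in `C` -/
noncomputable def inc (ends : E → Sym2 V) (C : Finset V) (a : E) : ℕ :=
  (C.filter (fun v => v ∈ ends a)).card

lemma inc_eq (ends : E → Sym2 V) (C : Finset V) (a : E) (v w : V) (h : ends a = s(v, w))
    (hvw : v ≠ w) : inc ends C a = (if v ∈ C then 1 else 0) + (if w ∈ C then 1 else 0) := by
  unfold inc
  rw [h]
  have : C.filter (fun x => x ∈ s(v, w)) = C.filter (fun x => x = v) ∪ C.filter (fun x => x = w) := by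
    ext x; simp [Sym2.mem_iff]; tauto
  rw [this, card_union_of_disjoint]
  · have hs : ∀ y, (C.filter (fun x => x = y)).card = if y ∈ C then 1 else 0 := by
      intro y
      by_cases hy : y ∈ C
      · rw [if_pos hy, Finset.card_eq_one]
        refine ⟨y, ?_⟩
        ext x
        simp only [Finset.mem_filter, Finset.mem_singleton]
        exact ⟨fun h => h.2, fun h => ⟨h ▸ hy, h⟩⟩
      · rw [if_neg hy, Finset.card_eq_zero]
        ext x
        simp only [Finset.mem_filter, Finset.notMem_empty, iff_false]
        rintro ⟨h1, rfl⟩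
        exact hy h1
    rw [hs, hs]
  · rw [Finset.disjoint_left]
    intro x hx hx'
    simp at hx hx'
    exact hvw (hx.2.symm.trans hx'.2)

lemma sum_inc (ends : E → Sym2 V) (hc : Mg.IsCubic ends) (C : Finset V) :
    ∑ a, inc ends C a = 3 * C.card := by
  unfold inc
  have := Finset.sum_card_bipartiteAbove_eq_sum_card_bipartiteBelow (s := C) (t := (univ : Finset E))
    (fun v a => v ∈ ends a)
  unfold bipartiteAbove bipartiteBelow at this
  rw [← this, Finset.sum_congr rfl (g := fun _ => 3)]
  · simp [mul_comm]
  · intro v _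
    rw [← hc v, Set.ncard_eq_toFinset_card']
    congr 1
    ext a; simp

lemma ends_cases (ends : E → Sym2 V) (hl : Mg.NoLoops ends) (a : E) :
    ∃ v w, ends a = s(v, w) ∧ v ≠ w := by
  have := hl a
  induction h : ends a with
  | _ v w =>
    refine ⟨v, w, rfl, ?_⟩
    rw [h] at this
    simpa using this

lemma even_card (ends : E → Sym2 V) (hl : Mg.NoLoops ends) (hc : Mg.IsCubic ends) :
    Even (Fintype.card V) := by
  have h := sum_inc ends hc univ
  have h2 : ∑ a, inc ends univ a = ∑ a : E, 2 := by
    refine Finset.sum_congr rfl fun a _ => ?_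
    obtain ⟨v, w, h, hvw⟩ := ends_cases ends hl a
    rw [inc_eq ends _ a v w h hvw]; simp
  rw [h2] at h
  simp at h
  rw [Nat.even_iff]; omega

lemma three_le_cut (ends : E → Sym2 V) (hl : Mg.NoLoops ends) (hc : Mg.IsCubic ends)
    (hb : Mg.Bridgeless ends) (C : Finset V) (hC : Odd C.card) :
    3 ≤ ((univ : Finset E).filter (fun a => Odd (inc ends C a))).card := by
  have h1 : Odd ((univ : Finset E).filter (fun a => Odd (inc ends C a))).card := by
    rw [← Finset.odd_sum_iff_odd_card_odd, sum_inc ends hc]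
    exact Odd.mul (by decide) hC
  have h2 : ((univ : Finset E).filter (fun a => Odd (inc ends C a))).card ≠ 1 := by
    intro h
    obtain ⟨a, ha⟩ := Finset.card_eq_one.1 h
    have key : ∀ b, Odd (inc ends C b) ↔ b = a := by
      intro b
      have := Finset.ext_iff.1 ha b
      simpa using this
    obtain ⟨v, w, hvw, hne⟩ := ends_cases ends hl a
    have inv : ∀ x y, Mg.Reach ends {f | f ≠ a} x y → (x ∈ C ↔ y ∈ C) := by
      intro x y hxy
      induction hxy with
      | refl => rfl
      | @tail y z _ hbc ih =>
        rw [ih]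
        obtain ⟨b, hb1, hb2⟩ := hbc
        have hyz : y ≠ z := by
          have := hl b
          rw [hb2] at this
          simpa using this
        have h3 : ¬ Odd (inc ends C b) := fun h => hb1 ((key b).1 h)
        rw [inc_eq ends C b y z hb2 hyz] at h3
        by_cases y ∈ C <;> by_cases z ∈ C <;> simp_all
    have h4 := inv v w (hb a v w hvw)
    have h5 := (key a).2 rfl
    rw [inc_eq ends C a v w hvw hne, Nat.odd_iff] at h5
    by_cases v ∈ C <;> by_cases w ∈ C <;> simp_all
  obtain ⟨k, hk⟩ := h1
  omega

lemma main_bound (ends : E → Sym2 V) (hl : Mg.NoLoops ends) (hc : Mg.IsCubic ends)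
    (hb : Mg.Bridgeless ends) (e f : E) (S : Finset V) {I : Type} [Fintype I] (K : I → Finset V)
    (hdisj : ∀ i j v, v ∈ K i → v ∈ K j → i = j) (hS : ∀ i v, v ∈ K i → v ∉ S)
    (hodd : ∀ i, Odd (K i).card)
    (hadj : ∀ a v w i, a ≠ e → a ≠ f → ends a = s(v, w) → v ∈ K i → w ∈ S ∨ w ∈ K i) :
    3 * Fintype.card I ≤ 3 * S.card + 4 := by
  have h1 : 3 * Fintype.card I ≤ ∑ i, ∑ a, (if Odd (inc ends (K i) a) then 1 else 0) := by
    calc 3 * Fintype.card I = ∑ i : I, 3 := by simp [mul_comm]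
      _ ≤ _ := by
        refine Finset.sum_le_sum fun i _ => ?_
        rw [← Finset.card_filter]
        exact three_le_cut ends hl hc hb _ (hodd i)
  rw [Finset.sum_comm] at h1
  have hv : ∀ v, ∑ i, (if v ∈ K i then 1 else 0) ≤ 1 := by
    intro v
    rw [← Finset.card_filter, Finset.card_le_one]
    intro i hi j hj
    simp at hi hj
    exact hdisj i j v hi hj
  have hv0 : ∀ v, v ∈ S → ∑ i, (if v ∈ K i then 1 else 0) = 0 := by
    intro v hvS
    refine Finset.sum_eq_zero fun i _ => if_neg fun h => hS i v h hvS
  have h2 : ∀ a, ∑ i, (if Odd (inc ends (K i) a) then 1 else 0) ≤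
      inc ends S a + ((if a = e then 2 else 0) + (if a = f then 2 else 0)) := by
    intro a
    obtain ⟨v, w, hvw, hne⟩ := ends_cases ends hl a
    have h3 : ∑ i, (if Odd (inc ends (K i) a) then 1 else 0) ≤
        ∑ i, (if v ∈ K i then 1 else 0) + ∑ i, (if w ∈ K i then 1 else 0) := by
      rw [← Finset.sum_add_distrib]
      refine Finset.sum_le_sum fun i _ => ?_
      rw [inc_eq ends _ a v w hvw hne]
      by_cases v ∈ K i <;> by_cases w ∈ K i <;> simp_all
      split_ifs <;> omega
    have hv1 := hv v
    have hw1 := hv w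
    by_cases hae : a = e
    · rw [if_pos hae]; omega
    by_cases haf : a = f
    · rw [if_pos haf]; omega
    rw [inc_eq ends S a v w hvw hne]
    by_cases hvS : v ∈ S
    · have := hv0 v hvS
      rw [if_pos hvS]; omega
    by_cases hwS : w ∈ S
    · have := hv0 w hwS
      rw [if_pos hwS]; omega
    rw [Finset.sum_eq_zero]
    · omega
    intro i _
    have p1 : v ∈ K i → w ∈ K i := fun h => (hadj a v w i hae haf hvw h).resolve_left hwS
    have p2 : w ∈ K i → v ∈ K i := fun h =>
      (hadj a w v i hae haf (hvw.trans Sym2.eq_swap) h).resolve_left hvS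
    rw [inc_eq ends _ a v w hvw hne]
    by_cases v ∈ K i <;> by_cases w ∈ K i <;> simp_all
  have h4 := Finset.sum_le_sum (s := univ) fun a _ => h2 a
  rw [Finset.sum_add_distrib, Finset.sum_add_distrib, sum_inc ends hc] at h4
  simp at h4
  simp at h1
  omega

/-- The simple graph of edges other than `e`, `f`. -/
def H (ends : E → Sym2 V) (hl : Mg.NoLoops ends) (e f : E) : SimpleGraph V where
  Adj v w := ∃ a, a ≠ e ∧ a ≠ f ∧ ends a = s(v, w)
  symm := ⟨fun v w ⟨a, h1, h2, h3⟩ => ⟨a, h1, h2, h3.trans Sym2.eq_swap⟩⟩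
  loopless := ⟨fun v ⟨a, _, _, h⟩ => hl a (by rw [h]; simp)⟩

lemma exists_pm (ends : E → Sym2 V) (hl : Mg.NoLoops ends) (hc : Mg.IsCubic ends)
    (hb : Mg.Bridgeless ends) (e f : E) :
    ∃ M : (H ends hl e f).Subgraph, M.IsPerfectMatching := by
  rw [SimpleGraph.tutte]
  intro u hu
  unfold SimpleGraph.IsTutteViolator at hu
  set L := ((⊤ : (H ends hl e f).Subgraph).deleteVerts u).coe with hL
  have hpar := SimpleGraph.odd_ncard_oddComponents (G := L)
  have hcard : Nat.card ((⊤ : (H ends hl e f).Subgraph).deleteVerts u).verts + u.ncard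
      = Fintype.card V := by
    have : ((⊤ : (H ends hl e f).Subgraph).deleteVerts u).verts = uᶜ := by
      ext; simp
    rw [this, Nat.card_coe_set_eq, add_comm, Set.ncard_add_ncard_compl, Nat.card_eq_fintype_card]
  have heven := even_card ends hl hc
  have hlow : u.ncard + 2 ≤ L.oddComponents.ncard := by
    rw [Nat.odd_iff, Nat.odd_iff] at hpar
    rw [Nat.even_iff] at heven
    omega
  have hbound := main_bound ends hl hc hb e f u.toFinset (I := L.oddComponents)
    (fun c => (Subtype.val '' c.1.supp).toFinset) ?_ ?_ ?_ ?_
  · rw [← Set.ncard_eq_toFinset_card', ← Nat.card_eq_fintype_card, Nat.card_coe_set_eq] at hbound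
    omega
  · rintro ⟨i, hi⟩ ⟨j, hj⟩ v h1 h2
    simp only [Set.mem_toFinset, Set.mem_image] at h1 h2
    obtain ⟨x, hx, rfl⟩ := h1
    obtain ⟨y, hy, hxy⟩ := h2
    obtain rfl := Subtype.ext hxy
    rw [SimpleGraph.ConnectedComponent.mem_supp_iff] at hx hy
    exact Subtype.ext (hx.symm.trans hy)
  · rintro ⟨i, hi⟩ v h1
    simp only [Set.mem_toFinset, Set.mem_image] at h1 ⊢
    obtain ⟨x, hx, rfl⟩ := h1
    have := x.2
    simpa using this
  · rintro ⟨i, hi⟩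
    rw [← Set.ncard_eq_toFinset_card', Set.ncard_image_of_injective _ Subtype.val_injective]
    exact hi
  · rintro a v w ⟨i, hi⟩ hae haf hvw h1
    simp only [Set.mem_toFinset, Set.mem_image] at h1 ⊢
    obtain ⟨x, hx, rfl⟩ := h1
    by_cases hw : w ∈ u
    · exact Or.inl hw
    · right
      have hx2 : x.1 ∉ u := by simpa using x.2
      refine ⟨⟨w, by simpa using hw⟩, ?_, rfl⟩
      rw [SimpleGraph.ConnectedComponent.mem_supp_iff] at hx ⊢
      rw [← hx, SimpleGraph.ConnectedComponent.eq]
      apply SimpleGraph.Adj.reachable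
      apply SimpleGraph.Adj.symm
      have : (H ends hl e f).Adj x.1 w := ⟨a, hae, haf, hvw⟩
      simp [hL, SimpleGraph.Subgraph.deleteVerts_adj, this, hx2, hw]

end Mg19

theorem stmt19 {V E : Type} [Fintype V] [Fintype E] (ends : E → Sym2 V)
    (hl : Mg.NoLoops ends) (hc : Mg.IsCubic ends) (hb : Mg.Bridgeless ends) :
    ∀ e f : E, ∃ F : Set E, Mg.IsTwoFactor ends F ∧ e ∈ F ∧ f ∈ F := by
  classical
  intro e f
  obtain ⟨M, hM⟩ := Mg19.exists_pm ends hl hc hb e f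
  have hex : ∀ z : Sym2 V, ∃ a : E, z ∈ M.edgeSet → a ≠ e ∧ a ≠ f ∧ ends a = z := by
    intro z
    by_cases hz : z ∈ M.edgeSet
    · induction z with
      | _ v w =>
        obtain ⟨a, ha⟩ := M.adj_sub (SimpleGraph.Subgraph.mem_edgeSet.1 hz)
        exact ⟨a, fun _ => ha⟩
    · exact ⟨e, fun h => absurd h hz⟩
  choose g hg using hex
  refine ⟨{a | ¬ (ends a ∈ M.edgeSet ∧ g (ends a) = a)}, ?_, ?_, ?_⟩
  · intro v
    obtain ⟨w, hw, huniq⟩ := SimpleGraph.Subgraph.isPerfectMatching_iff.1 hM v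
    have hz : s(v, w) ∈ M.edgeSet := hw
    obtain ⟨h1, h2, h3⟩ := hg _ hz
    have : {a | a ∈ {a | ¬ (ends a ∈ M.edgeSet ∧ g (ends a) = a)} ∧ v ∈ ends a}
        = {a | v ∈ ends a} \ {g s(v, w)} := by
      ext a
      simp only [Set.mem_setOf_eq, Set.mem_diff, Set.mem_singleton_iff]
      constructor
      · rintro ⟨ha, hva⟩
        refine ⟨hva, ?_⟩
        rintro rfl
        apply ha
        rw [h3]
        exact ⟨hz, rfl⟩
      · rintro ⟨hva, ha⟩
        refine ⟨?_, hva⟩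
        rintro ⟨ha1, ha2⟩
        obtain ⟨x, hx⟩ := Sym2.mem_iff_exists.1 hva
        rw [hx] at ha1 ha2
        have := huniq x ha1
        subst this
        exact ha ha2.symm
    rw [this, Set.ncard_diff_singleton_of_mem, hc v]
    simp [h3]
  · rintro ⟨h1, h2⟩
    exact (hg _ h1).1 h2
  · rintro ⟨h1, h2⟩
    exact (hg _ h1).2.1 h2
end
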